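/- There is an absolute constant C such that for all integers n ≥ 1, k ≥ 1 and every ε > 0, the Lebesgue measure of the set {x ∈ I : |Σ_{i=1}^n ξ^{(k)}_i(x)| > ε} is at most C·n²·k²·τ^k/ε⁴. -/

import Mathlib

/-!
With `N = 1/δ` and `p = τ^k`, the value of `ξ_i` at `x` is that of the `1`-periodic function
`centredInd p` at `N^i u`, where `u = x + 1/2 ∈ (0, 1)`.

The key point is that functions `ξ_i` whose indices are at least `k` apart behave like independent
variables. Since `p N^k = (τ/δ)^k` is an integer, for `i + k ≤ m` the jumps of `ξ_i` lie
on the grid of mesh `1 / (2 N^m)`, so `ξ_i` is constant on each half of every interval of `H_m`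
(`halfConst_X`). The factor `2` is needed because the jumps may fall on centres of intervals of
`H_m`, when `N^k` and `p N^k` have different parities. By symmetry `ξ_m` has mean zero on each
half, so it is orthogonal to every function constant on these halves (`integral_mul_X_eq_zero`).
Together with the identity `ξ² = (1 - 2p) ξ + p (1 - p)`, this evaluates the mixed moments, and
induction on the largest index gives `∫ (∑_{i ∈ s} ξ_i)⁴ ≤ 4 |s|² p` for every `k`-separated index
set `s` (`moments`).

Finally `{1, …, n}` is split into residue classes modulo `k`; at most `d = min k n` of them are
nonempty and each has at most `2n/d` elements (`card_class_le`). The Cauchy–Schwarz inequality,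
used twice, gives `∫ (∑_{i ≤ n} ξ_i)⁴ ≤ d³ · d · 4 (2n/d)² p ≤ 16 n² k² p` (`fourth_moment`), and
Markov's inequality concludes.
-/

open MeasureTheory

/-- Center of the interval of the partition `H_i` of `I = (−1/2, 1/2)` into intervals
of length `δ^i` which contains `x`. -/
noncomputable def ctr (δ : ℝ) (i : ℕ) (x : ℝ) : ℝ :=
  -(1 / 2) + ((⌊(x + 1 / 2) / δ ^ i⌋ : ℝ) + 1 / 2) * δ ^ i

/-- ξ′^{(k)}_i(x) = 1 if x lies in the central subinterval of relative length τ^k of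
its interval of the partition H_i, and 0 otherwise. -/
noncomputable def xiP (δ τ : ℝ) (k i : ℕ) (x : ℝ) : ℝ :=
  if |x - ctr δ i x| < τ ^ k * δ ^ i / 2 then 1 else 0

/-- ξ^{(k)}_i = ξ′^{(k)}_i − τ^k. -/
noncomputable def xiM (δ τ : ℝ) (k i : ℕ) (x : ℝ) : ℝ :=
  xiP δ τ k i x - τ ^ k

/-! ### The functions `ξ_i` as dilates of one periodic function -/

/-- The `1`-periodic indicator of the points whose fractional part is within `p/2` of `1/2`,
minus its mean `p`. -/
noncomputable def centredInd (p t : ℝ) : ℝ :=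
  (if |Int.fract t - 1 / 2| < p / 2 then 1 else 0) - p

/-- The function `ξ_i` in the coordinate `u = x + 1/2`, with `N = 1/δ` and `p = τ^k`. -/
noncomputable def X (N : ℕ) (p : ℝ) (i : ℕ) (u : ℝ) : ℝ := centredInd p ((N : ℝ) ^ i * u)

lemma xiM_eq_X {δ τ : ℝ} (hδ : 0 < δ) {N : ℕ} (hN : (N : ℝ) * δ = 1) (k i : ℕ) (x : ℝ) :
    xiM δ τ k i x = X N (τ ^ k) i (x + 1 / 2) := by
  have hNδ : (N : ℝ) ^ i * δ ^ i = 1 := by rw [← mul_pow, hN, one_pow]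
  have hpos : 0 < δ ^ i := pow_pos hδ i
  have hdiv : (x + 1 / 2) / δ ^ i = (N : ℝ) ^ i * (x + 1 / 2) := by
    rw [div_eq_iff hpos.ne']
    linear_combination (-(x + 1 / 2)) * hNδ
  have hsub : x - ctr δ i x = (Int.fract ((N : ℝ) ^ i * (x + 1 / 2)) - 1 / 2) * δ ^ i := by
    unfold ctr
    rw [hdiv, Int.fract]
    linear_combination (-(x + 1 / 2)) * hNδ
  unfold xiM xiP X centredInd
  rw [hsub, abs_mul, abs_of_pos hpos, show τ ^ k * δ ^ i / 2 = τ ^ k / 2 * δ ^ i by ring]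
  simp only [mul_lt_mul_iff_left₀ hpos]

lemma measurable_centredInd (p : ℝ) : Measurable (centredInd p) := by
  unfold centredInd
  refine Measurable.sub (Measurable.ite ?_ measurable_const measurable_const) measurable_const
  exact measurableSet_lt (by fun_prop) measurable_const

lemma abs_centredInd_le {p : ℝ} (h0 : 0 ≤ p) (h1 : p ≤ 1) (t : ℝ) : |centredInd p t| ≤ 1 := by
  unfold centredInd
  split_ifs <;> rw [abs_le] <;> constructor <;> linarith

lemma centredInd_sq (p t : ℝ) :
    centredInd p t ^ 2 = (1 - 2 * p) * centredInd p t + p * (1 - p) := by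
  unfold centredInd
  split_ifs <;> ring

/-! ### Bounded measurable functions and functions constant on grid cells -/

/-- Bounded measurable functions: a class closed under the operations used below, on which all
integrals over bounded intervals converge. -/
def BddMeas (G : ℝ → ℝ) : Prop := Measurable G ∧ ∃ B, ∀ u, |G u| ≤ B

namespace BddMeas

variable {F G : ℝ → ℝ}

lemma const (c : ℝ) : BddMeas (fun _ => c) := ⟨measurable_const, |c|, fun _ => le_rfl⟩

lemma add (hF : BddMeas F) (hG : BddMeas G) : BddMeas (fun u => F u + G u) := by
  obtain ⟨hF, A, hA⟩ := hF
  obtain ⟨hG, B, hB⟩ := hG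
  exact ⟨hF.add hG, A + B, fun u => (abs_add_le _ _).trans (add_le_add (hA u) (hB u))⟩

lemma mul (hF : BddMeas F) (hG : BddMeas G) : BddMeas (fun u => F u * G u) := by
  obtain ⟨hF, A, hA⟩ := hF
  obtain ⟨hG, B, hB⟩ := hG
  refine ⟨hF.mul hG, A * B, fun u => ?_⟩
  rw [abs_mul]
  exact mul_le_mul (hA u) (hB u) (abs_nonneg _) ((abs_nonneg _).trans (hA u))

lemma pow (hF : BddMeas F) (m : ℕ) : BddMeas (fun u => F u ^ m) := by
  induction m with
  | zero => simpa using const 1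
  | succ m ih => simpa only [pow_succ] using ih.mul hF

lemma sum {ι : Type*} (s : Finset ι) {f : ι → ℝ → ℝ} (h : ∀ i ∈ s, BddMeas (f i)) :
    BddMeas (fun u => ∑ i ∈ s, f i u) := by
  classical
  induction s using Finset.induction_on with
  | empty => simpa using const 0
  | insert a s ha ih =>
    simp only [Finset.sum_insert ha]
    exact (h a (by simp)).add (ih fun i hi => h i (by simp [hi]))

lemma integrable (hG : BddMeas G) (a b : ℝ) : IntervalIntegrable G volume a b := by
  obtain ⟨hG, B, hB⟩ := hG
  refine (intervalIntegrable_const (c := B)).mono_fun hG.aestronglyMeasurable ?_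
  exact Filter.Eventually.of_forall fun u => (hB u).trans (le_abs_self B)

end BddMeas

lemma bddMeas_X (N : ℕ) {p : ℝ} (h0 : 0 ≤ p) (h1 : p ≤ 1) (i : ℕ) : BddMeas (X N p i) :=
  ⟨(measurable_centredInd p).comp (measurable_const.mul measurable_id), 1,
    fun _ => abs_centredInd_le h0 h1 _⟩

/-- `G` is constant on every open cell of the grid of mesh `1/K`. Values at the grid points
are left free, since the intervals defining `ξ_i` are open. -/
def HalfConst (K : ℝ) (G : ℝ → ℝ) : Prop :=
  ∀ a : ℤ, ∃ c, ∀ u, (a : ℝ) < K * u → K * u < a + 1 → G u = c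

namespace HalfConst

variable {K : ℝ} {F G : ℝ → ℝ}

lemma const (c : ℝ) : HalfConst K (fun _ => c) := fun _ => ⟨c, fun _ _ _ => rfl⟩

lemma add (hF : HalfConst K F) (hG : HalfConst K G) : HalfConst K (fun u => F u + G u) := by
  intro a
  obtain ⟨c, hc⟩ := hF a
  obtain ⟨d, hd⟩ := hG a
  exact ⟨c + d, fun u h h' => by simp only [hc u h h', hd u h h']⟩

lemma pow (hF : HalfConst K F) (m : ℕ) : HalfConst K (fun u => F u ^ m) := by
  intro a
  obtain ⟨c, hc⟩ := hF a
  exact ⟨c ^ m, fun u h h' => by simp only [hc u h h']⟩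

lemma sum {ι : Type*} (s : Finset ι) {f : ι → ℝ → ℝ} (h : ∀ i ∈ s, HalfConst K (f i)) :
    HalfConst K (fun u => ∑ i ∈ s, f i u) := by
  classical
  induction s using Finset.induction_on with
  | empty => simpa using const 0
  | insert a s ha ih =>
    simp only [Finset.sum_insert ha]
    exact (h a (by simp)).add (ih fun i hi => h i (by simp [hi]))

end HalfConst

/-! ### Orthogonality -/

/-- The jumps of `centredInd p` lie on the grid of mesh `1 / (2R)` as soon as `p * R` is an
integer. -/
lemma centredInd_congr {p : ℝ} {R P : ℕ} (hR : 0 < R) (hP : p * R = P) {a : ℤ} {t t' : ℝ}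
    (h1 : (a : ℝ) < 2 * R * t) (h2 : 2 * R * t < a + 1)
    (h1' : (a : ℝ) < 2 * R * t') (h2' : 2 * R * t' < a + 1) :
    centredInd p t = centredInd p t' := by
  have hR' : (0 : ℝ) < R := by exact_mod_cast hR
  -- Comparison with an integer gives the same answer anywhere in the open cell `(a, a + 1)`.
  have key : ∀ z : ℤ, ∀ w w' : ℝ, (a : ℝ) < w → w < a + 1 → (a : ℝ) < w' → w' < a + 1 →
      (z : ℝ) < w → (z : ℝ) < w' := by
    intro z w w' _ hw2 hw1' _ hz
    have : z < a + 1 := by exact_mod_cast hz.trans hw2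
    have : (z : ℝ) ≤ a := by exact_mod_cast Int.lt_add_one_iff.mp this
    linarith
  have key' : ∀ z : ℤ, ∀ w w' : ℝ, (a : ℝ) < w → w < a + 1 → (a : ℝ) < w' → w' < a + 1 →
      w < (z : ℝ) → w' < (z : ℝ) := by
    intro z w w' hw1 _ _ hw2' hz
    have : a < z := by exact_mod_cast hw1.trans hz
    have : (a : ℝ) + 1 ≤ z := by exact_mod_cast Int.add_one_le_iff.mpr this
    linarith
  have hfl : ⌊t'⌋ = ⌊t⌋ := by
    have hle := Int.floor_le t
    have hlt := Int.lt_floor_add_one t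
    rw [Int.floor_eq_iff]
    constructor
    · by_contra! hcon
      have := key' (2 * R * ⌊t⌋) _ _ h1' h2' h1 h2 (by push_cast; gcongr)
      push_cast at this
      have : 2 * (R : ℝ) * ⌊t⌋ ≤ 2 * R * t := by gcongr
      linarith
    · have := key' (2 * R * (⌊t⌋ + 1)) _ _ h1 h2 h1' h2' (by push_cast; gcongr)
      push_cast at this
      exact lt_of_mul_lt_mul_left this (by positivity)
  have hiff : ∀ s : ℝ, ⌊s⌋ = ⌊t⌋ → (|Int.fract s - 1 / 2| < p / 2 ↔
      (((2 * R * ⌊t⌋ + R - P : ℤ) : ℝ) < 2 * R * s ∧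
        2 * R * s < ((2 * R * ⌊t⌋ + R + P : ℤ) : ℝ))) := by
    intro s hs
    rw [Int.fract, hs, abs_lt]
    push_cast
    rw [← hP]
    constructor
    · rintro ⟨ha, hb⟩
      constructor <;> nlinarith
    · rintro ⟨ha, hb⟩
      constructor
      · refine lt_of_mul_lt_mul_left (a := 2 * (R : ℝ)) ?_ (by positivity)
        linarith
      · refine lt_of_mul_lt_mul_left (a := 2 * (R : ℝ)) ?_ (by positivity)
        linarith
  unfold centredInd
  congr 1
  refine if_congr ?_ rfl rfl
  rw [hiff t rfl, hiff t' hfl]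
  constructor
  · rintro ⟨ha, hb⟩
    exact ⟨key _ _ _ h1 h2 h1' h2' ha, key' _ _ _ h1 h2 h1' h2' hb⟩
  · rintro ⟨ha, hb⟩
    exact ⟨key _ _ _ h1' h2' h1 h2 ha, key' _ _ _ h1' h2' h1 h2 hb⟩

/-- With a gap of at least `k` between the indices, `p * N ^ (m - i)` is an integer, so `ξ_i` does
not jump inside the halves of the intervals of `H_m`. -/
lemma halfConst_X {N P k : ℕ} {p : ℝ} (hN : 0 < N) (hP : p * (N : ℝ) ^ k = P) {i m : ℕ}
    (him : i + k ≤ m) : HalfConst (2 * (N : ℝ) ^ m) (X N p i) := by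
  obtain ⟨l, rfl⟩ := Nat.exists_eq_add_of_le him
  have hR : p * ((N ^ (k + l) : ℕ) : ℝ) = ((P * N ^ l : ℕ) : ℝ) := by
    push_cast
    rw [← hP]
    ring
  have hK : ∀ u : ℝ, 2 * (N : ℝ) ^ (i + k + l) * u
      = 2 * ((N ^ (k + l) : ℕ) : ℝ) * ((N : ℝ) ^ i * u) := by
    intro u
    push_cast
    ring
  have hpos : (0 : ℝ) < 2 * (N : ℝ) ^ (i + k + l) := by positivity
  intro a
  -- The cell is nonempty, and its midpoint serves as the reference point.
  refine ⟨X N p i ((a + 1 / 2) / (2 * (N : ℝ) ^ (i + k + l))), fun u h1 h2 => ?_⟩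
  have hmid := mul_div_cancel₀ ((a : ℝ) + 1 / 2) hpos.ne'
  rw [hK] at h1 h2 hmid
  refine centredInd_congr (pow_pos hN _) hR h1 h2 ?_ ?_ <;> rw [hmid] <;> linarith

/-- By symmetry about `1/2`, the function `centredInd p` has mean zero on each half of a period. -/
lemma integral_centredInd_half {p : ℝ} (h0 : 0 ≤ p) (h1 : p ≤ 1) (j : ℕ) :
    ∫ t in ((j : ℝ) / 2)..((j + 1 : ℝ) / 2), centredInd p t = 0 := by
  have hint : ∀ a b : ℝ, IntervalIntegrable (centredInd p) volume a b := fun a b =>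
    BddMeas.integrable ⟨measurable_centredInd p, 1, abs_centredInd_le h0 h1⟩ a b
  have piece : ∀ (q : ℕ) (a b c : ℝ), a ≤ b →
      (∀ t ∈ Set.Ioo a b, centredInd p (t + q) = c) →
      ∫ t in (a + q)..(b + q), centredInd p t = (b - a) * c := by
    intro q a b c hab h
    rw [← intervalIntegral.integral_comp_add_right, intervalIntegral.integral_of_le hab,
      integral_Ioc_eq_integral_Ioo, setIntegral_congr_fun measurableSet_Ioo h]
    simp [hab]
  have hval : ∀ (q : ℕ) (t : ℝ), 0 < t → t < 1 →
      centredInd p (t + q) = (if |t - 1 / 2| < p / 2 then 1 else 0) - p := by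
    intro q t ht0 ht1
    unfold centredInd
    rw [Int.fract_add_natCast, Int.fract_eq_self.mpr ⟨ht0.le, ht1⟩]
  obtain ⟨q, rfl | rfl⟩ := j.even_or_odd'
  · have e1 : ((2 * q : ℕ) : ℝ) / 2 = 0 + q := by push_cast; ring
    have e2 : (((2 * q : ℕ) : ℝ) + 1) / 2 = 1 / 2 + q := by push_cast; ring
    rw [e1, e2, ← intervalIntegral.integral_add_adjacent_intervals
        (hint _ ((1 - p) / 2 + q)) (hint _ _),
      piece q 0 ((1 - p) / 2) (-p) (by linarith) ?_,
      piece q ((1 - p) / 2) (1 / 2) (1 - p) (by linarith) ?_]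
    · ring
    · rintro t ⟨ha, hb⟩
      rw [hval q t (by linarith) (by linarith), if_pos]
      rw [abs_lt]
      constructor <;> linarith
    · rintro t ⟨ha, hb⟩
      rw [hval q t (by linarith) (by linarith), if_neg]
      · ring
      · rw [abs_lt]
        rintro ⟨h, -⟩
        linarith
  · have e1 : ((2 * q + 1 : ℕ) : ℝ) / 2 = 1 / 2 + q := by push_cast; ring
    have e2 : (((2 * q + 1 : ℕ) : ℝ) + 1) / 2 = 1 + q := by push_cast; ring
    rw [e1, e2, ← intervalIntegral.integral_add_adjacent_intervals
        (hint _ ((1 + p) / 2 + q)) (hint _ _),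
      piece q (1 / 2) ((1 + p) / 2) (1 - p) (by linarith) ?_,
      piece q ((1 + p) / 2) 1 (-p) (by linarith) ?_]
    · ring
    · rintro t ⟨ha, hb⟩
      rw [hval q t (by linarith) (by linarith), if_neg]
      · ring
      · rw [abs_lt]
        rintro ⟨-, h⟩
        linarith
    · rintro t ⟨ha, hb⟩
      rw [hval q t (by linarith) (by linarith), if_pos]
      rw [abs_lt]
      constructor <;> linarith

/-- `ξ_m` is orthogonal to every function constant on the halves of the intervals of `H_m`. -/
lemma integral_mul_X_eq_zero {N m : ℕ} {p : ℝ} (hN : 0 < N) (h0 : 0 ≤ p) (h1 : p ≤ 1)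
    {G : ℝ → ℝ} (hG : BddMeas G) (hc : HalfConst (2 * (N : ℝ) ^ m) G) :
    ∫ u in (0 : ℝ)..1, G u * X N p m u = 0 := by
  have hNm : (0 : ℝ) < (N : ℝ) ^ m := by positivity
  have hsum := intervalIntegral.sum_integral_adjacent_intervals
    (f := fun u => G u * X N p m u) (μ := volume)
    (a := fun j : ℕ => (j : ℝ) / (2 * (N : ℝ) ^ m)) (n := 2 * N ^ m)
    (fun j _ => (hG.mul (bddMeas_X N h0 h1 m)).integrable _ _)
  have hend : ((2 * N ^ m : ℕ) : ℝ) / (2 * (N : ℝ) ^ m) = 1 := by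
    push_cast
    exact div_self (by positivity)
  simp only [hend, Nat.cast_zero, zero_div] at hsum
  rw [← hsum]
  refine Finset.sum_eq_zero fun j _ => ?_
  obtain ⟨c, hcj⟩ := hc j
  have hle : (j : ℝ) / (2 * (N : ℝ) ^ m) ≤ ((j + 1 : ℕ) : ℝ) / (2 * (N : ℝ) ^ m) := by
    gcongr
    simp
  have hcongr : ∫ u in ((j : ℝ) / (2 * (N : ℝ) ^ m))..(((j + 1 : ℕ) : ℝ) / (2 * (N : ℝ) ^ m)),
        G u * X N p m u
      = ∫ u in ((j : ℝ) / (2 * (N : ℝ) ^ m))..(((j + 1 : ℕ) : ℝ) / (2 * (N : ℝ) ^ m)),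
        c * X N p m u := by
    rw [intervalIntegral.integral_of_le hle, intervalIntegral.integral_of_le hle,
      integral_Ioc_eq_integral_Ioo, integral_Ioc_eq_integral_Ioo]
    refine setIntegral_congr_fun measurableSet_Ioo ?_
    rintro u ⟨hu1, hu2⟩
    rw [div_lt_iff₀ (by positivity)] at hu1
    rw [lt_div_iff₀ (by positivity)] at hu2
    push_cast at hu2
    simp only
    rw [hcj u (by push_cast; linarith) (by push_cast; linarith)]
  rw [hcongr, intervalIntegral.integral_const_mul]
  unfold X
  rw [intervalIntegral.integral_comp_mul_left _ hNm.ne']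
  have e1 : (N : ℝ) ^ m * ((j : ℝ) / (2 * (N : ℝ) ^ m)) = j / 2 := by field_simp
  have e2 : (N : ℝ) ^ m * (((j + 1 : ℕ) : ℝ) / (2 * (N : ℝ) ^ m)) = (j + 1) / 2 := by
    push_cast
    field_simp
  rw [e1, e2, integral_centredInd_half h0 h1, smul_zero, mul_zero]

/-! ### Moments -/

/-- Moments of a sum over a `k`-separated index set. The bounds on the mean and the second moment
feed the induction for the fourth. -/
lemma moments {N P k : ℕ} {p : ℝ} (hN : 0 < N) (h0 : 0 ≤ p) (h1 : p ≤ 1)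
    (hP : p * (N : ℝ) ^ k = P) (s : Finset ℕ) :
    (∀ i ∈ s, ∀ j ∈ s, i < j → i + k ≤ j) →
      (∫ u in (0 : ℝ)..1, ∑ i ∈ s, X N p i u) = 0 ∧
      (∫ u in (0 : ℝ)..1, (∑ i ∈ s, X N p i u) ^ 2) ≤ s.card * p ∧
      (∫ u in (0 : ℝ)..1, (∑ i ∈ s, X N p i u) ^ 4) ≤ 4 * (s.card : ℝ) ^ 2 * p := by
  induction s using Finset.induction_on_max with
  | empty => simp
  | insert a s hlt ih =>
    intro hsep
    obtain ⟨i1, i2, i4⟩ := ih fun i hi j hj => hsep i (by simp [hi]) j (by simp [hj])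
    have ha : a ∉ s := fun h => lt_irrefl _ (hlt a h)
    set S : ℝ → ℝ := fun u => ∑ i ∈ s, X N p i u with hS
    have bS : BddMeas S := BddMeas.sum s fun i _ => bddMeas_X N h0 h1 i
    have cS : HalfConst (2 * (N : ℝ) ^ a) S := HalfConst.sum s fun i hi =>
      halfConst_X hN hP (hsep i (by simp [hi]) a (by simp) (hlt i hi))
    have bX := bddMeas_X N h0 h1 a
    have orth : ∀ r : ℕ, ∫ u in (0 : ℝ)..1, S u ^ r * X N p a u = 0 := fun r =>
      integral_mul_X_eq_zero hN h0 h1 (bS.pow r) (cS.pow r)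
    have hsq : ∀ u, X N p a u ^ 2 = (1 - 2 * p) * X N p a u + p * (1 - p) :=
      fun u => centredInd_sq p _
    have I : ∀ {F : ℝ → ℝ}, BddMeas F → IntervalIntegrable F volume 0 1 :=
      fun h => h.integrable 0 1
    have I0 : ∫ u in (0 : ℝ)..1, X N p a u = 0 := by simpa using orth 0
    have I1 : ∫ u in (0 : ℝ)..1, S u * X N p a u = 0 := by simpa using orth 1
    have hcard : ((insert a s).card : ℝ) = s.card + 1 := by
      rw [Finset.card_insert_of_notMem ha]
      push_cast
      ring
    have hn : (0 : ℝ) ≤ s.card := Nat.cast_nonneg _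
    simp only [Finset.sum_insert ha, hcard]
    change (∫ u in (0 : ℝ)..1, X N p a u + S u) = 0 ∧
      (∫ u in (0 : ℝ)..1, (X N p a u + S u) ^ 2) ≤ _ ∧
      (∫ u in (0 : ℝ)..1, (X N p a u + S u) ^ 4) ≤ _
    change (∫ u in (0 : ℝ)..1, S u) = 0 at i1
    change (∫ u in (0 : ℝ)..1, S u ^ 2) ≤ _ at i2
    change (∫ u in (0 : ℝ)..1, S u ^ 4) ≤ _ at i4
    refine ⟨?_, ?_, ?_⟩
    · rw [intervalIntegral.integral_add (I bX) (I bS), I0, i1, add_zero]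
    · have expand : ∀ u, (X N p a u + S u) ^ 2 = ((S u ^ 2 + 2 * (S u * X N p a u))
          + (1 - 2 * p) * X N p a u) + p * (1 - p) := by
        intro u
        linear_combination hsq u
      have b1 := bS.pow 2
      have b2 := (BddMeas.const 2).mul (bS.mul bX)
      have b3 := (BddMeas.const (1 - 2 * p)).mul bX
      simp only [expand]
      rw [intervalIntegral.integral_add (I ((b1.add b2).add b3)) (I (BddMeas.const _)),
        intervalIntegral.integral_add (I (b1.add b2)) (I b3),
        intervalIntegral.integral_add (I b1) (I b2),
        intervalIntegral.integral_const_mul, intervalIntegral.integral_const_mul, I0, I1,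
        intervalIntegral.integral_const]
      simp only [smul_eq_mul]
      nlinarith [mul_nonneg h0 h0]
    · -- `ξ⁴ ≤ ξ²` because `|ξ| ≤ 1`; the powers `ξ²`, `ξ³` reduce to affine functions of `ξ`.
      have expand : ∀ u, (X N p a u + S u) ^ 4 ≤ ((((S u ^ 4 + 4 * (S u ^ 3 * X N p a u))
          + 6 * (1 - 2 * p) * (S u ^ 2 * X N p a u)) + 6 * (p * (1 - p)) * S u ^ 2)
          + (4 * ((1 - 2 * p) ^ 2 + p * (1 - p)) * (S u * X N p a u)
            + 4 * ((1 - 2 * p) * (p * (1 - p))) * S u))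
          + ((1 - 2 * p) * X N p a u + p * (1 - p)) := by
        intro u
        have hX2 : X N p a u ^ 2 ≤ 1 := by
          have := abs_centredInd_le h0 h1 ((N : ℝ) ^ a * u)
          exact (sq_le_one_iff_abs_le_one _).mpr this
        have hX4 : X N p a u ^ 4 ≤ X N p a u ^ 2 := by nlinarith [sq_nonneg (X N p a u)]
        have h2 := hsq u
        have h3 : X N p a u ^ 3 = ((1 - 2 * p) ^ 2 + p * (1 - p)) * X N p a u
            + (1 - 2 * p) * (p * (1 - p)) := by
          linear_combination (X N p a u + (1 - 2 * p)) * h2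
        have : (X N p a u + S u) ^ 4 = S u ^ 4 + 4 * (S u ^ 3 * X N p a u)
            + 6 * S u ^ 2 * X N p a u ^ 2 + 4 * S u * X N p a u ^ 3 + X N p a u ^ 4 := by ring
        rw [this]
        rw [h2] at hX4
        rw [h2, h3]
        linarith
      have b1 := bS.pow 4
      have b2 := (BddMeas.const 4).mul ((bS.pow 3).mul bX)
      have b3 := (BddMeas.const (6 * (1 - 2 * p))).mul ((bS.pow 2).mul bX)
      have b4 := (BddMeas.const (6 * (p * (1 - p)))).mul (bS.pow 2)
      have b5 := (BddMeas.const (4 * ((1 - 2 * p) ^ 2 + p * (1 - p)))).mul (bS.mul bX)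
      have b6 := (BddMeas.const (4 * ((1 - 2 * p) * (p * (1 - p))))).mul bS
      have b7 := (BddMeas.const (1 - 2 * p)).mul bX
      have b8 := BddMeas.const (p * (1 - p))
      have b123 := (b1.add b2).add b3
      have mono := intervalIntegral.integral_mono_on (zero_le_one' ℝ) (I ((bX.add bS).pow 4))
        (I (((b123.add b4).add (b5.add b6)).add (b7.add b8))) (fun u _ => expand u)
      refine mono.trans ?_
      rw [intervalIntegral.integral_add (I ((b123.add b4).add (b5.add b6))) (I (b7.add b8)),
        intervalIntegral.integral_add (I (b123.add b4)) (I (b5.add b6)),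
        intervalIntegral.integral_add (I b123) (I b4),
        intervalIntegral.integral_add (I (b1.add b2)) (I b3),
        intervalIntegral.integral_add (I b1) (I b2),
        intervalIntegral.integral_add (I b5) (I b6),
        intervalIntegral.integral_add (I b7) (I b8)]
      simp only [intervalIntegral.integral_const_mul, orth, I0, I1, i1,
        intervalIntegral.integral_const, smul_eq_mul]
      have hp : p * (1 - p) ≤ p := by nlinarith
      have hq : 0 ≤ p * (1 - p) := mul_nonneg h0 (by linarith)
      -- With `p (1 - p) ≤ 1/4` the cross term `6 p (1 - p) ∫ S²` is at most `(3/2) |s| p`; the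
      -- increment `4 (2 |s| + 1) p` of the bound leaves room for it and for `∫ ξ² ≤ p`.
      have hq4 : p * (1 - p) ≤ 1 / 4 := by nlinarith [sq_nonneg (p - 1 / 2)]
      have hm : p * (1 - p) * (∫ u in (0 : ℝ)..1, S u ^ 2) ≤ 1 / 4 * (s.card * p) :=
        (mul_le_mul_of_nonneg_left i2 hq).trans
          (mul_le_mul_of_nonneg_right hq4 (mul_nonneg hn h0))
      have hnp : 0 ≤ s.card * p := mul_nonneg hn h0
      linarith

/-- A residue class modulo `k` has at most `n / k + 1 ≤ 2 n / min k n` points in `{1, …, n}`.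
Classes are those of `i - 1`, so that for `n < k` the nonempty ones are `r = 0, …, n - 1`. -/
lemma card_class_le {n k : ℕ} (hk : 1 ≤ k) (r : ℕ) :
    min k n * ((Finset.Icc 1 n).filter fun i => (i - 1) % k = r).card ≤ 2 * n := by
  have hc : ((Finset.Icc 1 n).filter fun i => (i - 1) % k = r).card ≤ n.count (· ≡ r [MOD k]) := by
    rw [Nat.count_eq_card_filter_range]
    refine Finset.card_le_card_of_injOn (fun i => i - 1) ?_ ?_
    · intro i hi
      simp only [Finset.coe_filter, Finset.mem_Icc, Set.mem_ofPred_eq] at hi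
      obtain ⟨⟨hi1, hi2⟩, rfl⟩ := hi
      simp only [Finset.coe_filter, Finset.mem_range, Set.mem_ofPred_eq]
      exact ⟨by omega, (Nat.mod_modEq _ _).symm⟩
    · intro i hi j hj hij
      simp only [Finset.coe_filter, Finset.mem_Icc, Set.mem_ofPred_eq] at hi hj
      simp only at hij
      omega
  rw [Nat.count_modEq_card _ hk] at hc
  have hc' : ((Finset.Icc 1 n).filter fun i => (i - 1) % k = r).card ≤ n / k + 1 := by
    refine hc.trans ?_
    split_ifs <;> omega
  refine (Nat.mul_le_mul_left _ hc').trans ?_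
  rw [mul_add, mul_one]
  have h1 : min k n * (n / k) ≤ n :=
    (Nat.mul_le_mul_right _ (min_le_left _ _)).trans (Nat.mul_div_le n k)
  have h2 : min k n ≤ n := min_le_right _ _
  omega

lemma fourth_moment {N P k n : ℕ} {p : ℝ} (hN : 0 < N) (h0 : 0 ≤ p) (h1 : p ≤ 1)
    (hP : p * (N : ℝ) ^ k = P) (hk : 1 ≤ k) :
    ∫ u in (0 : ℝ)..1, (∑ i ∈ Finset.Icc 1 n, X N p i u) ^ 4
      ≤ 16 * (n : ℝ) ^ 2 * (k : ℝ) ^ 2 * p := by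
  set d := min k n with hd
  set c : ℕ → Finset ℕ := fun r => (Finset.Icc 1 n).filter fun i => (i - 1) % k = r with hcdef
  have hsplit : ∀ u, ∑ i ∈ Finset.Icc 1 n, X N p i u
      = ∑ r ∈ Finset.range d, ∑ i ∈ c r, X N p i u := by
    intro u
    refine (Finset.sum_fiberwise_of_maps_to (fun i hi => ?_) _).symm
    rw [Finset.mem_Icc] at hi
    rw [Finset.mem_range, hd, lt_min_iff]
    exact ⟨Nat.mod_lt _ hk, (Nat.mod_le _ _).trans_lt (by omega)⟩
  have hsep : ∀ r, ∀ i ∈ c r, ∀ j ∈ c r, i < j → i + k ≤ j := by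
    intro r i hi j hj hij
    simp only [hcdef, Finset.mem_filter, Finset.mem_Icc] at hi hj
    have hmod : (i - 1) ≡ (j - 1) [MOD k] := hi.2.trans hj.2.symm
    have := Nat.le_of_dvd (by omega) ((Nat.modEq_iff_dvd' (by omega)).mp hmod)
    omega
  have bS : ∀ r, BddMeas fun u => ∑ i ∈ c r, X N p i u := fun r =>
    BddMeas.sum _ fun i _ => bddMeas_X N h0 h1 i
  have hconv : ∀ u, (∑ i ∈ Finset.Icc 1 n, X N p i u) ^ 4
      ≤ (d : ℝ) ^ 3 * ∑ r ∈ Finset.range d, (∑ i ∈ c r, X N p i u) ^ 4 := by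
    intro u
    rw [hsplit]
    have hcs : ∀ f : ℕ → ℝ, (∑ r ∈ Finset.range d, f r) ^ 2
        ≤ d * ∑ r ∈ Finset.range d, f r ^ 2 := fun f => by
      simpa using sq_sum_le_card_mul_sum_sq (s := Finset.range d) (f := f)
    -- The Cauchy–Schwarz inequality is applied twice.
    set f : ℕ → ℝ := fun r => ∑ i ∈ c r, X N p i u with hf
    calc (∑ r ∈ Finset.range d, f r) ^ 4 = ((∑ r ∈ Finset.range d, f r) ^ 2) ^ 2 := by ring
      _ ≤ (d * ∑ r ∈ Finset.range d, f r ^ 2) ^ 2 :=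
          pow_le_pow_left₀ (sq_nonneg _) (hcs f) 2
      _ = (d : ℝ) ^ 2 * (∑ r ∈ Finset.range d, f r ^ 2) ^ 2 := by ring
      _ ≤ (d : ℝ) ^ 2 * (d * ∑ r ∈ Finset.range d, (f r ^ 2) ^ 2) := by
          gcongr
          exact hcs _
      _ = (d : ℝ) ^ 3 * ∑ r ∈ Finset.range d, f r ^ 4 := by
          simp only [← pow_mul]
          ring
  have bI := BddMeas.sum (Finset.Icc 1 n) fun i _ => bddMeas_X N h0 h1 i
  have bR := BddMeas.sum (Finset.range d) fun r _ => (bS r).pow 4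
  refine (intervalIntegral.integral_mono_on zero_le_one ((bI.pow 4).integrable 0 1)
    (((BddMeas.const ((d : ℝ) ^ 3)).mul bR).integrable 0 1) fun u _ => hconv u).trans ?_
  rw [intervalIntegral.integral_const_mul,
    intervalIntegral.integral_finsetSum fun r _ => ((bS r).pow 4).integrable 0 1]
  have hterm : ∀ r, (d : ℝ) ^ 2 * ∫ u in (0 : ℝ)..1, (∑ i ∈ c r, X N p i u) ^ 4
      ≤ 16 * (n : ℝ) ^ 2 * p := by
    intro r
    have hm := (moments hN h0 h1 hP (c r) (hsep r)).2.2
    have hcard : (d : ℝ) * (c r).card ≤ 2 * n := by exact_mod_cast card_class_le hk r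
    have hsq : ((d : ℝ) * (c r).card) ^ 2 ≤ (2 * n) ^ 2 := by gcongr
    calc (d : ℝ) ^ 2 * ∫ u in (0 : ℝ)..1, (∑ i ∈ c r, X N p i u) ^ 4
        ≤ (d : ℝ) ^ 2 * (4 * ((c r).card : ℝ) ^ 2 * p) := by gcongr
      _ = 4 * p * ((d : ℝ) * (c r).card) ^ 2 := by ring
      _ ≤ 4 * p * (2 * n) ^ 2 := by gcongr
      _ = 16 * (n : ℝ) ^ 2 * p := by ring
  have hdk : (d : ℝ) ≤ k := by exact_mod_cast min_le_left k n
  calc (d : ℝ) ^ 3 * ∑ r ∈ Finset.range d, ∫ u in (0 : ℝ)..1, (∑ i ∈ c r, X N p i u) ^ 4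
      = d * ∑ r ∈ Finset.range d,
          ((d : ℝ) ^ 2 * ∫ u in (0 : ℝ)..1, (∑ i ∈ c r, X N p i u) ^ 4) := by
        rw [← Finset.mul_sum]
        ring
    _ ≤ d * ∑ r ∈ Finset.range d, 16 * (n : ℝ) ^ 2 * p := by
        exact mul_le_mul_of_nonneg_left (Finset.sum_le_sum fun r _ => hterm r) (Nat.cast_nonneg d)
    _ = 16 * (n : ℝ) ^ 2 * p * (d : ℝ) ^ 2 := by
        rw [Finset.sum_const, Finset.card_range, nsmul_eq_mul]
        ring
    _ ≤ 16 * (n : ℝ) ^ 2 * p * (k : ℝ) ^ 2 := by gcongr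
    _ = 16 * (n : ℝ) ^ 2 * (k : ℝ) ^ 2 * p := by ring

/-! ### The deviation bound -/

/-- There is an absolute constant C such that for all n, k ≥ 1 and all
ε > 0, the measure of {x ∈ I : |Σ_{i=1}^n ξ^{(k)}_i(x)| > ε} is at most
C·n²·k²·τ^k/ε⁴. -/
theorem statement15 :
    ∃ C : ℝ, ∀ δ τ : ℝ, δ ∈ Set.Ioo (0 : ℝ) 1 → τ ∈ Set.Ioo (0 : ℝ) 1 →
      (∃ m : ℕ, (m : ℝ) * δ = 1) → (∃ m : ℕ, (m : ℝ) * τ = 1) →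
      (∃ m : ℕ, (m : ℝ) * δ = τ) →
      ∀ n k : ℕ, 1 ≤ n → 1 ≤ k → ∀ ε : ℝ, 0 < ε →
        volume {x ∈ Set.Ioo (-(1 / 2) : ℝ) (1 / 2) |
            ε < |∑ i ∈ Finset.Icc 1 n, xiM δ τ k i x|}
          ≤ ENNReal.ofReal (C * n ^ 2 * k ^ 2 * τ ^ k / ε ^ 4) := by
  refine ⟨16, ?_⟩
  rintro δ τ ⟨hδ0, -⟩ ⟨hτ0, hτ1⟩ ⟨N, hN⟩ - ⟨M, hM⟩ n k - hk ε hε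
  have hN0 : 0 < N := by
    rcases Nat.eq_zero_or_pos N with rfl | h
    · simp at hN
    · exact h
  have hP : τ ^ k * (N : ℝ) ^ k = ((M ^ k : ℕ) : ℝ) := by
    rw [← mul_pow, ← hM, mul_assoc, mul_comm δ, hN, mul_one]
    push_cast
    rfl
  have h0 : 0 ≤ τ ^ k := by positivity
  have h1 : τ ^ k ≤ 1 := pow_le_one₀ hτ0.le hτ1.le
  have hm := fourth_moment (n := n) hN0 h0 h1 hP hk
  set S : ℝ → ℝ := fun u => ∑ i ∈ Finset.Icc 1 n, X N (τ ^ k) i u with hS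
  have bS : BddMeas S := BddMeas.sum _ fun i _ => bddMeas_X N h0 h1 i
  have hshift : ∫ x in (-(1 / 2) : ℝ)..(1 / 2), S (x + 1 / 2) ^ 4
      = ∫ u in (0 : ℝ)..1, S u ^ 4 := by
    rw [intervalIntegral.integral_comp_add_right (fun u => S u ^ 4)]
    norm_num
  have bT : BddMeas fun x => S (x + 1 / 2) ^ 4 :=
    ⟨((bS.pow 4).1).comp (measurable_id.add_const _),
      (bS.pow 4).2.imp fun B hB u => hB (u + 1 / 2)⟩
  have hle : (-(1 / 2) : ℝ) ≤ 1 / 2 := by norm_num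
  have hint := (intervalIntegrable_iff_integrableOn_Ioo_of_le hle).mp (bT.integrable _ _)
  rw [← hshift, intervalIntegral.integral_of_le hle, integral_Ioc_eq_integral_Ioo] at hm
  have markov := mul_meas_ge_le_integral_of_nonneg
    (Filter.Eventually.of_forall fun x => by positivity) hint (ε ^ 4)
  have hε4 : 0 < ε ^ 4 := by positivity
  have hsub : {x ∈ Set.Ioo (-(1 / 2) : ℝ) (1 / 2) |
      ε < |∑ i ∈ Finset.Icc 1 n, xiM δ τ k i x|}
      ⊆ {x | ε ^ 4 ≤ S (x + 1 / 2) ^ 4} ∩ Set.Ioo (-(1 / 2) : ℝ) (1 / 2) := by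
    rintro x ⟨hx, hεx⟩
    refine ⟨?_, hx⟩
    simp only [xiM_eq_X hδ0 hN] at hεx
    change ε ^ 4 ≤ S (x + 1 / 2) ^ 4
    rw [← (show Even 4 by decide).pow_abs (S (x + 1 / 2))]
    exact pow_le_pow_left₀ hε.le hεx.le 4
  have hmeas : MeasurableSet {x : ℝ | ε ^ 4 ≤ S (x + 1 / 2) ^ 4} :=
    measurableSet_le measurable_const bT.1
  refine (measure_mono hsub).trans ?_
  rw [← Measure.restrict_apply hmeas, ← ofReal_measureReal]
  refine ENNReal.ofReal_le_ofReal ?_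
  rw [le_div_iff₀ hε4, mul_comm]
  exact markov.trans hm
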